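/- Let K be a number field, let γ, θ ∈ K, let L = ℚ(θ) ⊆ K, and let d = [ℚ(θ) : ℚ]. Suppose Tr_{K/L}(γ) ≠ 0. Then the sequence x(k) = Tr_{K/ℚ}(γ·θ^k) satisfies no linear homogeneous recurrence of order smaller than d: if m ≥ 1 and r₁, …, r_m ∈ ℚ satisfy x(k+m) = r₁·x(k+m−1) + ⋯ + r_m·x(k) for all k ≥ 0, then m ≥ d. Consequently, the minimal polynomial of the linear recurrence sequence x(k) equals the minimal polynomial of θ over ℚ. -/

import Mathlib

open Polynomial IntermediateField

/-- Proposition 1(b). For `γ, θ` in a number field `K` with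
`L = ℚ(θ)` and `Tr_{K/L}(γ) ≠ 0`, the sequence `x(k) = Tr_{K/ℚ}(γ·θ^k)`
satisfies no linear homogeneous recurrence of order smaller than
`d = [ℚ(θ) : ℚ]`. -/
theorem trace_sequence_minimal_order
    (K : Type*) [Field K] [NumberField K] (γ θ : K)
    (htr : Algebra.trace (ℚ⟮θ⟯ : IntermediateField ℚ K) K γ ≠ 0)
    (m : ℕ) (hm : 1 ≤ m) (r : Fin m → ℚ)
    (hrec : ∀ k : ℕ,
      Algebra.trace ℚ K (γ * θ ^ (k + m)) =
        ∑ j : Fin m, r j * Algebra.trace ℚ K (γ * θ ^ (k + (m - 1 - (j : ℕ))))) :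
    (minpoly ℚ θ).natDegree ≤ m := by
  classical
  set p : ℚ[X] := X ^ m - ∑ j : Fin m, C (r j) * X ^ (m - 1 - (j : ℕ)) with hp
  have hdeg : (∑ j : Fin m, C (r j) * X ^ (m - 1 - (j : ℕ)) : ℚ[X]).degree < (m : ℕ) := by
    rw [← Polynomial.mem_degreeLT]
    refine Submodule.sum_mem _ fun j _ => ?_
    rw [Polynomial.mem_degreeLT]
    refine (Polynomial.degree_C_mul_X_pow_le _ _).trans_lt ?_
    exact_mod_cast (by omega : m - 1 - (j : ℕ) < m)
  have hpm : p.Monic := Polynomial.monic_X_pow_sub hdeg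
  have hpd : p.natDegree ≤ m := by
    refine Polynomial.natDegree_le_of_degree_le ?_
    refine (Polynomial.degree_sub_le _ _).trans (max_le ?_ hdeg.le)
    exact Polynomial.degree_X_pow_le _
  -- vanishing of all traces
  have h1 : ∀ k : ℕ, Algebra.trace ℚ K (γ * (θ ^ k * aeval θ p)) = 0 := by
    intro k
    have e : γ * (θ ^ k * aeval θ p) = γ * θ ^ (k + m) -
        ∑ j : Fin m, r j • (γ * θ ^ (k + (m - 1 - (j : ℕ)))) := by
      simp only [hp, map_sub, map_sum, map_mul, map_pow, aeval_X, aeval_C, mul_sub,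
        Finset.mul_sum, Algebra.smul_def, pow_add]
      congr 1
      refine Finset.sum_congr rfl fun j _ => ?_
      ring
    rw [e, map_sub, map_sum, hrec k]
    simp
  have h2 : ∀ q : ℚ[X], Algebra.trace ℚ K (γ * (aeval θ q * aeval θ p)) = 0 := by
    intro q
    induction q using Polynomial.induction_on' with
    | add a b ha hb => rw [map_add, add_mul, mul_add, map_add, ha, hb, add_zero]
    | monomial n a =>
      have e : γ * (aeval θ (monomial n a) * aeval θ p) = a • (γ * (θ ^ n * aeval θ p)) := by
        rw [aeval_monomial, Algebra.smul_def]; ring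
      rw [e, map_smul, h1, smul_zero]
  have hint : IsIntegral ℚ θ := Algebra.IsIntegral.isIntegral θ
  set t := Algebra.trace (ℚ⟮θ⟯ : IntermediateField ℚ K) K γ with ht
  set P : ℚ⟮θ⟯ := aeval (AdjoinSimple.gen ℚ θ) p with hP
  have hPθ : algebraMap ℚ⟮θ⟯ K P = aeval θ p := by
    rw [hP, ← aeval_algebraMap_apply, AdjoinSimple.algebraMap_gen]
  have h3 : ∀ y : ℚ⟮θ⟯, Algebra.traceForm ℚ ℚ⟮θ⟯ (P * t) y = 0 := by
    intro y
    obtain ⟨q, hq⟩ : ∃ q : ℚ[X], algebraMap ℚ⟮θ⟯ K y = aeval θ q := by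
      have hy := y.2
      rw [← IntermediateField.mem_toSubalgebra,
        IntermediateField.adjoin_simple_toSubalgebra_of_isAlgebraic hint.isAlgebraic,
        Algebra.adjoin_singleton_eq_range_aeval] at hy
      obtain ⟨q, hq⟩ := hy
      exact ⟨q, hq.symm⟩
    have h := h2 q
    rw [← hq, ← hPθ, ← map_mul, mul_comm, ← Algebra.smul_def,
      ← Algebra.trace_trace (S := ℚ⟮θ⟯), map_smul] at h
    rw [Algebra.traceForm_apply, ← h, smul_eq_mul]
    congr 1
    ring
  have h4 : P * t = 0 := (traceForm_nondegenerate ℚ ℚ⟮θ⟯).1 _ h3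
  have h5 : P = 0 := (mul_eq_zero.mp h4).resolve_right htr
  have h6 : aeval θ p = 0 := by rw [← hPθ, h5, map_zero]
  exact (Polynomial.natDegree_le_of_dvd (minpoly.dvd ℚ θ h6) hpm.ne_zero).trans hpd
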